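/- arXiv:1404.0214 — 12 statements merged into one kernel-verified Lean document; each statement's English description precedes it below -/
import Mathlib

section
/- For every real number d > 0 and every real ρ with ρ > arsinh d, the function x ↦ d / √(sinh² x − d²) is Lebesgue integrable on the half-open interval (arsinh d, ρ] (despite the inverse-square-root singularity at the left endpoint x = arsinh d). -/
open MeasureTheory Real

/-- The increments of `sinh` dominate those of the identity, so `sinh² x - sinh² a` grows at least
linearly in `x - a` when `0 ≤ a ≤ x`. -/
theorem two_mul_sinh_mul_sub_le_sinh_sq_sub_sinh_sq {a x : ℝ} (ha : 0 ≤ a) (hx : a ≤ x) :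
    2 * sinh a * (x - a) ≤ sinh x ^ 2 - sinh a ^ 2 := by
  have hinc : x - a ≤ sinh x - sinh a := by
    have := sinh_sub_id_strictMono.monotone hx
    linarith
  have hpos : 0 ≤ sinh a := sinh_nonneg_iff.2 ha
  nlinarith [mul_le_mul_of_nonneg_left hinc hpos, sq_nonneg (sinh x - sinh a)]

/-- The function `(x - a) ^ r` with `-1 < r` is integrable on bounded intervals starting at `a`. -/
theorem integrableOn_Ioc_sub_rpow {r : ℝ} (hr : -1 < r) {a b : ℝ} (hab : a ≤ b) :
    IntegrableOn (fun x => (x - a) ^ r) (Set.Ioc a b) := by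
  rw [← intervalIntegrable_iff_integrableOn_Ioc_of_le hab]
  simpa using (intervalIntegral.intervalIntegrable_rpow' (a := 0) (b := b - a) hr).comp_sub_right a

theorem catenoid_height_integrand_integrableOn_Ioc
    (d ρ : ℝ) (hd : 0 < d) (hρ : Real.arsinh d < ρ) :
    MeasureTheory.IntegrableOn
      (fun x => d / Real.sqrt (Real.sinh x ^ 2 - d ^ 2))
      (Set.Ioc (Real.arsinh d) ρ) := by
  have hdom : IntegrableOn (fun x => d / √(2 * d) * (x - arsinh d) ^ (-(1 / 2) : ℝ))
      (Set.Ioc (arsinh d) ρ) :=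
    (integrableOn_Ioc_sub_rpow (by norm_num) hρ.le).const_mul _
  refine Integrable.mono' hdom (Measurable.aestronglyMeasurable (by fun_prop)) ?_
  filter_upwards [ae_restrict_mem measurableSet_Ioc] with x hx
  have hlin := two_mul_sinh_mul_sub_le_sinh_sq_sub_sinh_sq (arsinh_nonneg_iff.2 hd.le) hx.1.le
  rw [sinh_arsinh] at hlin
  have ht : 0 < x - arsinh d := sub_pos.2 hx.1
  rw [norm_of_nonneg (by positivity), rpow_neg ht.le, ← sqrt_eq_rpow, ← div_eq_mul_inv, div_div,
    ← sqrt_mul (by positivity)]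
  gcongr
end

section
/- For every real number d > 0, the function x ↦ d / √(sinh² x − d²) is Lebesgue integrable on the open interval (arsinh d, ∞); consequently the quantity h(d) = ∫_{(arsinh d, ∞)} d/√(sinh² x − d²) dx is finite. -/
open MeasureTheory Real

/-- On `(arsinh d, ∞)` the function `d * cosh x / (sinh x * √(sinh² x - d²))` is the derivative of
`arctan (√(sinh² x - d²) / d)`. -/
theorem hasDerivAt_arctan_sqrt_sinh_sq_sub_sq_div {d x : ℝ} (hd : 0 < d) (hx : d < sinh x) :
    HasDerivAt (fun x => arctan (√(sinh x ^ 2 - d ^ 2) / d))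
      (d * cosh x / (sinh x * √(sinh x ^ 2 - d ^ 2))) x := by
  have hpos : 0 < sinh x ^ 2 - d ^ 2 := by nlinarith
  have hs : 0 < √(sinh x ^ 2 - d ^ 2) := sqrt_pos.2 hpos
  have hsinh : 0 < sinh x := hd.trans hx
  have h := (((((hasDerivAt_sinh x).pow 2).sub_const (d ^ 2)).sqrt hpos.ne').div_const d).arctan
  refine h.congr_deriv ?_
  simp only [Pi.pow_apply, div_pow, sq_sqrt hpos.le]
  have h1 : 1 + (sinh x ^ 2 - d ^ 2) / d ^ 2 = sinh x ^ 2 / d ^ 2 := by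
    field_simp
    ring
  rw [h1]
  field_simp
  norm_num [mul_comm]

/-- The function `d * cosh x / (sinh x * √(sinh² x - d²))` is integrable on `(arsinh d, ∞)`. -/
theorem integrableOn_mul_cosh_div_sinh_mul_sqrt {d : ℝ} (hd : 0 < d) :
    IntegrableOn (fun x => d * cosh x / (sinh x * √(sinh x ^ 2 - d ^ 2)))
      (Set.Ioi (arsinh d)) := by
  have hlt : ∀ x ∈ Set.Ioi (arsinh d), d < sinh x := fun x hx => by
    simpa using sinh_lt_sinh.2 (Set.mem_Ioi.1 hx)
  refine integrableOn_Ioi_deriv_of_nonneg (l := π / 2)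
    (g := fun x => arctan (√(sinh x ^ 2 - d ^ 2) / d)) ?_
    (fun x hx => hasDerivAt_arctan_sqrt_sinh_sq_sub_sq_div hd (hlt x hx)) (fun x hx => ?_) ?_
  · exact Continuous.continuousWithinAt (by fun_prop)
  · have := hd.trans (hlt x hx)
    have := cosh_pos x
    positivity
  · refine (tendsto_arctan_atTop.mono_right nhdsWithin_le_nhds).comp ?_
    refine Filter.Tendsto.atTop_div_const hd (tendsto_sqrt_atTop.comp ?_)
    refine Filter.tendsto_atTop_add_const_right _ _ ?_
    refine (Filter.tendsto_pow_atTop two_ne_zero).comp ?_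
    exact Filter.tendsto_atTop_mono' _ (Filter.eventually_atTop.2
      ⟨0, fun x hx => self_le_sinh_iff.2 hx⟩) Filter.tendsto_id

theorem catenoid_height_integrand_integrableOn_Ioi
    (d : ℝ) (hd : 0 < d) :
    MeasureTheory.IntegrableOn
      (fun x => d / Real.sqrt (Real.sinh x ^ 2 - d ^ 2))
      (Set.Ioi (Real.arsinh d)) := by
  refine (integrableOn_mul_cosh_div_sinh_mul_sqrt hd).mono'
    (Measurable.aestronglyMeasurable (by fun_prop)) ?_
  refine (ae_restrict_mem measurableSet_Ioi).mono fun x hx => ?_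
  have hx' : d < sinh x := by simpa using sinh_lt_sinh.2 (Set.mem_Ioi.1 hx)
  have hsinh : 0 < sinh x := hd.trans hx'
  have hs : 0 < √(sinh x ^ 2 - d ^ 2) := sqrt_pos.2 (by nlinarith)
  rw [norm_of_nonneg (by positivity), div_le_div_iff₀ hs (by positivity)]
  have := mul_le_mul_of_nonneg_left (sinh_lt_cosh x).le (mul_pos hd hs).le
  linarith
end

section
/- For every real number d > 0, one has ∫_{(arsinh d, ∞)} d/√(sinh² x − d²) dx < π/2; that is, the asymptotic half-height h(d) of the minimal catenoid C_d is strictly less than π/2, so every catenoid C_d has total height 2·h(d) strictly less than π. -/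
open MeasureTheory Real

/-- Away from the neck, `-arcsin (d / sinh x)` is an antiderivative of `coth x` times the slope
of the catenoid profile. -/
theorem hasDerivAt_neg_arcsin_div_sinh {d x : ℝ} (hd : 0 < d) (hx : d < sinh x) :
    HasDerivAt (fun y => -arcsin (d / sinh y))
      (cosh x / sinh x * (d / √(sinh x ^ 2 - d ^ 2))) x := by
  have hs : 0 < sinh x := hd.trans hx
  have hlt : d / sinh x < 1 := (div_lt_one hs).2 hx
  have hpos : 0 < d / sinh x := div_pos hd hs
  have hr : 0 < √(sinh x ^ 2 - d ^ 2) := sqrt_pos.2 (by nlinarith)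
  have hsqrt : √(1 - (d / sinh x) ^ 2) = √(sinh x ^ 2 - d ^ 2) / sinh x := by
    rw [show 1 - (d / sinh x) ^ 2 = (sinh x ^ 2 - d ^ 2) / sinh x ^ 2 by field_simp,
      sqrt_div' _ (sq_nonneg _), sqrt_sq hs.le]
  have hdiv : HasDerivAt (fun y => d / sinh y) (-(d * cosh x) / sinh x ^ 2) x := by
    exact ((hasDerivAt_const x d).div (hasDerivAt_sinh x) hs.ne').congr_deriv (by simp)
  have h := ((hasDerivAt_arcsin (by linarith) hlt.ne).comp x hdiv).neg
  refine h.congr_deriv ?_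
  rw [hsqrt]
  field_simp

theorem catenoid_half_height_lt_pi_div_two (d : ℝ) (hd : 0 < d) :
    (∫ x in Set.Ioi (Real.arsinh d), d / Real.sqrt (Real.sinh x ^ 2 - d ^ 2))
      < Real.pi / 2 := by
  set f : ℝ → ℝ := fun x => d / √(sinh x ^ 2 - d ^ 2)
  set g : ℝ → ℝ := fun x => cosh x / sinh x * f x
  have hsinh : ∀ x ∈ Set.Ioi (arsinh d), d < sinh x := fun x hx => by
    simpa using sinh_lt_sinh.2 hx
  have hfpos : ∀ x ∈ Set.Ioi (arsinh d), 0 < f x := fun x hx =>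
    div_pos hd (sqrt_pos.2 (by nlinarith [hsinh x hx]))
  have hfg : ∀ x ∈ Set.Ioi (arsinh d), f x < g x := fun x hx =>
    lt_mul_of_one_lt_left (hfpos x hx)
      ((one_lt_div (hd.trans (hsinh x hx))).2 (sinh_lt_cosh x))
  have hcont : ContinuousWithinAt (fun y => -arcsin (d / sinh y)) (Set.Ici (arsinh d))
      (arsinh d) := by
    refine ContinuousAt.continuousWithinAt ?_
    refine (continuous_arcsin.continuousAt.comp
      (continuousAt_const.div continuous_sinh.continuousAt ?_)).neg
    simpa using hd.ne'
  have hderiv : ∀ x ∈ Set.Ioi (arsinh d),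
      HasDerivAt (fun y => -arcsin (d / sinh y)) (g x) x := fun x hx =>
    hasDerivAt_neg_arcsin_div_sinh hd (hsinh x hx)
  have hgpos : ∀ x ∈ Set.Ioi (arsinh d), 0 ≤ g x := fun x hx =>
    (hfpos x hx).le.trans (hfg x hx).le
  have htop : Filter.Tendsto sinh Filter.atTop Filter.atTop :=
    sinhOrderIso.tendsto_atTop
  have hlim : Filter.Tendsto (fun y => -arcsin (d / sinh y)) Filter.atTop (nhds 0) := by
    have h := ((continuous_arcsin.tendsto 0).comp (htop.const_div_atTop d)).neg
    simpa using h
  have hgint : IntegrableOn g (Set.Ioi (arsinh d)) :=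
    integrableOn_Ioi_deriv_of_nonneg hcont hderiv hgpos hlim
  have hgval : ∫ x in Set.Ioi (arsinh d), g x = π / 2 := by
    rw [integral_Ioi_of_hasDerivAt_of_nonneg hcont hderiv hgpos hlim]
    simp [hd.ne']
  have hfmeas : Measurable f := by
    have := continuous_sinh.measurable
    fun_prop
  have hfint : IntegrableOn f (Set.Ioi (arsinh d)) := by
    refine hgint.mono' hfmeas.aestronglyMeasurable ?_
    filter_upwards [ae_restrict_mem measurableSet_Ioi] with x hx
    rw [norm_of_nonneg (hfpos x hx).le]
    exact (hfg x hx).le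
  rw [← hgval, ← sub_pos, ← integral_sub hgint hfint]
  refine (setIntegral_pos_iff_support_of_nonneg_ae (f := fun x => g x - f x) ?_
    (hgint.sub hfint)).2 ?_
  · filter_upwards [ae_restrict_mem measurableSet_Ioi] with x hx
    exact (sub_pos.2 (hfg x hx)).le
  · have hsub : Set.Ioi (arsinh d) ⊆
        Function.support (fun x => g x - f x) ∩ Set.Ioi (arsinh d) :=
      fun x hx => ⟨(sub_pos.2 (hfg x hx)).ne', hx⟩
    exact lt_of_lt_of_le (by simp) (measure_mono hsub)
end

section
/- For every real number d > 0 and every real ρ with ρ > arsinh d, the function x ↦ sinh² x / √(sinh² x − d²) is Lebesgue integrable on the half-open interval (arsinh d, ρ]. -/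
open MeasureTheory Real

/-- The derivative of `x ↦ √(sinh² x - d²)` is integrable on `(arsinh d, ρ]`. -/
theorem integrableOn_sinh_mul_cosh_div_sqrt (d ρ : ℝ) (hd : 0 < d) :
    IntegrableOn (fun x => sinh x * cosh x / √(sinh x ^ 2 - d ^ 2))
      (Set.Ioc (arsinh d) ρ) := by
  have hlt : ∀ x ∈ Set.Ioo (arsinh d) ρ, d < sinh x := fun x hx => by
    simpa using sinh_lt_sinh.2 hx.1
  refine intervalIntegral.integrableOn_deriv_of_nonneg
    (g := fun x => √(sinh x ^ 2 - d ^ 2)) (by fun_prop) (fun x hx => ?_) (fun x hx => ?_)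
  · have hne : sinh x ^ 2 - d ^ 2 ≠ 0 := by nlinarith [hlt x hx]
    convert (((hasDerivAt_sinh x).fun_pow 2).sub_const (d ^ 2)).sqrt hne using 1
    rw [Nat.cast_ofNat, pow_one, mul_assoc, mul_div_mul_left _ _ two_ne_zero]
  · have hsinh : 0 < sinh x := hd.trans (hlt x hx)
    have hcosh := cosh_pos x
    positivity

theorem catenoid_area_integrand_integrableOn_Ioc
    (d ρ : ℝ) (hd : 0 < d) (hρ : Real.arsinh d < ρ) :
    MeasureTheory.IntegrableOn
      (fun x => Real.sinh x ^ 2 / Real.sqrt (Real.sinh x ^ 2 - d ^ 2))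
      (Set.Ioc (Real.arsinh d) ρ) := by
  refine (integrableOn_sinh_mul_cosh_div_sqrt d ρ hd).mono'
    (Measurable.aestronglyMeasurable (by fun_prop)) ?_
  filter_upwards [ae_restrict_mem measurableSet_Ioc] with x hx
  have hsinh : 0 < sinh x := sinh_pos_iff.2 ((arsinh_pos_iff.2 hd).trans hx.1)
  rw [norm_of_nonneg (by positivity), pow_two (sinh x)]
  gcongr
  exact (sinh_lt_cosh x).le
end

section
/- For every real number d > 0, one has ∫_{(arsinh d, arsinh(d+1)]} sinh² x / √(sinh² x − d²) dx ≤ (d+1) · log( ( √(1 + (d+1)²) + √(2d+1) ) / √(1 + d²) ). -/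
open MeasureTheory Real

/-- A primitive of `sinh x / √(sinh² x - d²)` away from the zeros of the denominator. -/
theorem hasDerivAt_log_cosh_add_sqrt {d x : ℝ} (h : 0 < sinh x ^ 2 - d ^ 2) :
    HasDerivAt (fun y => log (cosh y + √(sinh y ^ 2 - d ^ 2)))
      (sinh x / √(sinh x ^ 2 - d ^ 2)) x := by
  have hs : 0 < √(sinh x ^ 2 - d ^ 2) := sqrt_pos.2 h
  have hc : 0 < cosh x + √(sinh x ^ 2 - d ^ 2) := add_pos (cosh_pos x) hs
  have hsq : HasDerivAt (fun y => sinh y ^ 2 - d ^ 2) (2 * sinh x * cosh x) x := by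
    simpa using ((hasDerivAt_sinh x).fun_pow 2).sub_const (d ^ 2)
  refine (((hasDerivAt_cosh x).fun_add (hsq.sqrt h.ne')).log hc.ne').congr_deriv ?_
  field_simp
  ring

theorem continuous_log_cosh_add_sqrt (d : ℝ) :
    Continuous fun y => log (cosh y + √(sinh y ^ 2 - d ^ 2)) := by
  refine Continuous.log (by fun_prop) fun y => ?_
  have := cosh_pos y
  positivity

theorem catenoid_area_first_piece_bound (d : ℝ) (hd : 0 < d) :
    (∫ x in Set.Ioc (Real.arsinh d) (Real.arsinh (d + 1)),
        Real.sinh x ^ 2 / Real.sqrt (Real.sinh x ^ 2 - d ^ 2))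
      ≤ (d + 1) *
        Real.log ((Real.sqrt (1 + (d + 1) ^ 2) + Real.sqrt (2 * d + 1))
          / Real.sqrt (1 + d ^ 2)) := by
  have hab : arsinh d ≤ arsinh (d + 1) := arsinh_le_arsinh.2 (by linarith)
  have lt_sinh {x : ℝ} (hx : arsinh d < x) : d < sinh x := by
    simpa using sinh_lt_sinh.2 hx
  have hderiv : ∀ x ∈ Set.Ioo (arsinh d) (arsinh (d + 1)),
      HasDerivAt (fun y => log (cosh y + √(sinh y ^ 2 - d ^ 2)))
        (sinh x / √(sinh x ^ 2 - d ^ 2)) x := fun x hx =>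
    hasDerivAt_log_cosh_add_sqrt (by nlinarith [lt_sinh hx.1])
  have hcont := (continuous_log_cosh_add_sqrt d).continuousOn
    (s := Set.Icc (arsinh d) (arsinh (d + 1)))
  have hint : IntegrableOn (fun x => sinh x / √(sinh x ^ 2 - d ^ 2))
      (Set.Ioc (arsinh d) (arsinh (d + 1))) :=
    intervalIntegral.integrableOn_deriv_of_nonneg hcont hderiv fun x hx =>
      div_nonneg (hd.trans (lt_sinh hx.1)).le (sqrt_nonneg _)
  have hval : ∫ x in Set.Ioc (arsinh d) (arsinh (d + 1)), sinh x / √(sinh x ^ 2 - d ^ 2)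
      = log ((√(1 + (d + 1) ^ 2) + √(2 * d + 1)) / √(1 + d ^ 2)) := by
    rw [← intervalIntegral.integral_of_le hab,
      intervalIntegral.integral_eq_sub_of_hasDerivAt_of_le hab hcont hderiv
        ((intervalIntegrable_iff_integrableOn_Ioc_of_le hab).2 hint),
      log_div (by positivity) (by positivity)]
    simp only [cosh_arsinh, sinh_arsinh, sub_self, sqrt_zero, add_zero]
    ring_nf
  rw [← hval, ← integral_const_mul]
  refine integral_mono_of_nonneg (ae_of_all _ fun x => by positivity) (hint.const_mul _) ?_
  filter_upwards [ae_restrict_mem measurableSet_Ioc] with x hx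
  have hle : sinh x ≤ d + 1 := by simpa using sinh_le_sinh.2 hx.2
  have hpos : 0 ≤ sinh x := (hd.trans (lt_sinh hx.1)).le
  rw [← mul_div_assoc, sq (sinh x)]
  gcongr
end

section
/- The ratio of (d+1) · log( ( √(1 + (d+1)²) + √(2d+1) ) / √(1 + d²) ) to √(2d) tends to 1 as d → ∞; that is, the quantity (d+1) · log( ( √(1 + (d+1)²) + √(2d+1) ) / √(1 + d²) ) is asymptotic to √(2d). -/
open Filter Real

/-- `arsinh x / x → 1` as `x → 0`. -/
lemma tendsto_arsinh_div_self_nhdsNE_zero :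
    Tendsto (fun x : ℝ => arsinh x / x) (nhdsWithin 0 {0}ᶜ) (nhds 1) := by
  have h := (hasDerivAt_arsinh 0).tendsto_slope
  simpa [slope_fun_def, div_eq_inv_mul] using h

/-- The logarithm of a leg plus the hypotenuse over the other leg is an `arsinh`. -/
lemma log_sqrt_add_sqrt_div_sqrt_eq_arsinh {a b : ℝ} (ha : 0 < a) (hb : 0 ≤ b) :
    log ((√(a + b) + √b) / √a) = arsinh √(b / a) := by
  have h : 1 + √(b / a) ^ 2 = (a + b) / a := by
    rw [sq_sqrt (by positivity)]
    field_simp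
  rw [arsinh, h, sqrt_div hb, sqrt_div (by positivity), ← add_div, add_comm]

theorem first_piece_bound_asymptotic_sqrt_two_d :
    Filter.Tendsto
      (fun d : ℝ =>
        ((d + 1) *
          Real.log ((Real.sqrt (1 + (d + 1) ^ 2) + Real.sqrt (2 * d + 1))
            / Real.sqrt (1 + d ^ 2))) / Real.sqrt (2 * d))
      Filter.atTop (nhds 1) := by
  have hratio : Tendsto (fun d : ℝ => (2 * d + 1) / (1 + d ^ 2)) atTop (nhds 0) := by
    have hc : ContinuousAt (fun t : ℝ => (2 * t + t ^ 2) / (t ^ 2 + 1)) 0 := by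
      fun_prop (disch := norm_num)
    have h := hc.tendsto.comp tendsto_inv_atTop_zero
    norm_num at h
    refine h.congr' ?_
    filter_upwards [eventually_gt_atTop 0] with d hd
    simp only [Function.comp_apply]
    field_simp
  have harg : Tendsto (fun d : ℝ => √((2 * d + 1) / (1 + d ^ 2))) atTop
      (nhdsWithin 0 {0}ᶜ) := by
    refine tendsto_nhdsWithin_iff.2 ⟨by simpa using hratio.sqrt, ?_⟩
    filter_upwards [eventually_gt_atTop 0] with d hd
    have : 0 < √((2 * d + 1) / (1 + d ^ 2)) := by positivity
    exact this.ne'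
  have hfactor : Tendsto (fun d : ℝ => (d + 1) * √((2 * d + 1) / (1 + d ^ 2)) / √(2 * d))
      atTop (nhds 1) := by
    have hc : ContinuousAt
        (fun t : ℝ => √((1 + t) ^ 2 * (1 + t / 2) / (t ^ 2 + 1))) 0 := by
      fun_prop (disch := norm_num)
    have h := hc.tendsto.comp tendsto_inv_atTop_zero
    norm_num at h
    refine h.congr' ?_
    filter_upwards [eventually_gt_atTop 0] with d hd
    have hd1 : 0 ≤ d + 1 := by positivity
    simp only [Function.comp_apply]
    rw [← sqrt_sq hd1, ← sqrt_mul (by positivity), ← sqrt_div (by positivity)]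
    congr 1
    field_simp
  have h := hfactor.mul (tendsto_arsinh_div_self_nhdsNE_zero.comp harg)
  rw [mul_one] at h
  refine h.congr' ?_
  filter_upwards [eventually_gt_atTop 0] with d hd
  have hsum : 1 + (d + 1) ^ 2 = (1 + d ^ 2) + (2 * d + 1) := by ring
  have hpos : 0 < √((2 * d + 1) / (1 + d ^ 2)) := by positivity
  rw [hsum, log_sqrt_add_sqrt_div_sqrt_eq_arsinh (by positivity) (by positivity)]
  simp only [Function.comp_apply]
  field_simp
end

section
/- For every real number d > 0 and every real ρ with ρ ≥ arsinh(d+1), one has ∫_{arsinh(d+1)}^{ρ} sinh² x / √(sinh² x − d²) dx ≤ (1/2)·( √( e^{2ρ} − (2 + 4d²) ) − √(8d + 2) ). -/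
open MeasureTheory Real

/-- The lower bound `sinh² x ≥ (e^{2x} - 2) / 4`. -/
lemma exp_two_mul_sub_two_le_four_mul_sinh_sq (x : ℝ) :
    exp (2 * x) - 2 ≤ 4 * sinh x ^ 2 := by
  have h : exp x * exp (-x) = 1 := by rw [← exp_add, add_neg_cancel, exp_zero]
  rw [sinh_eq, two_mul, exp_add]
  nlinarith [sq_nonneg (exp (-x))]

lemma four_mul_sinh_sq_le_exp_two_mul {x : ℝ} (hx : 0 ≤ x) :
    4 * sinh x ^ 2 ≤ exp (2 * x) := by
  have h : 2 * sinh x ≤ exp x := by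
    rw [sinh_eq]
    linarith [exp_pos (-x)]
  rw [two_mul, exp_add]
  nlinarith [sinh_nonneg_iff.2 hx]

lemma four_mul_sq_add_one_le_exp_two_mul_arsinh {s : ℝ} (hs : 0 ≤ s) :
    4 * s ^ 2 + 1 ≤ exp (2 * arsinh s) := by
  have hsq : √(1 + s ^ 2) ^ 2 = 1 + s ^ 2 := sq_sqrt (by positivity)
  have hle : s ≤ √(1 + s ^ 2) := le_sqrt_of_sq_le (by linarith)
  rw [two_mul, exp_add, exp_arsinh]
  nlinarith

lemma hasDerivAt_sqrt_exp_two_mul_sub_div_two {c x : ℝ} (h : 0 < exp (2 * x) - c) :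
    HasDerivAt (fun y => √(exp (2 * y) - c) / 2)
      (exp (2 * x) / (2 * √(exp (2 * x) - c))) x := by
  have h1 : HasDerivAt (fun y : ℝ => exp (2 * y) - c) (exp (2 * x) * (2 * 1)) x :=
    (((hasDerivAt_id x).const_mul 2).exp).sub_const c
  refine ((h1.sqrt h.ne').div_const 2).congr_deriv ?_
  ring

lemma sinh_sq_div_sqrt_le {d x : ℝ} (hx : 0 ≤ x) (h : 0 < exp (2 * x) - (2 + 4 * d ^ 2)) :
    sinh x ^ 2 / √(sinh x ^ 2 - d ^ 2) ≤
      exp (2 * x) / (2 * √(exp (2 * x) - (2 + 4 * d ^ 2))) := by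
  have hr : 0 < √(exp (2 * x) - (2 + 4 * d ^ 2)) := sqrt_pos.2 h
  have hden : √(exp (2 * x) - (2 + 4 * d ^ 2)) / 2 ≤ √(sinh x ^ 2 - d ^ 2) := by
    apply le_sqrt_of_sq_le
    rw [div_pow, sq_sqrt h.le]
    linarith [exp_two_mul_sub_two_le_four_mul_sinh_sq x]
  calc sinh x ^ 2 / √(sinh x ^ 2 - d ^ 2)
      ≤ (exp (2 * x) / 4) / (√(exp (2 * x) - (2 + 4 * d ^ 2)) / 2) := by
        gcongr
        linarith [four_mul_sinh_sq_le_exp_two_mul hx]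
    _ = exp (2 * x) / (2 * √(exp (2 * x) - (2 + 4 * d ^ 2))) := by
        field_simp
        norm_num

theorem catenoid_area_second_piece_bound
    (d ρ : ℝ) (hd : 0 < d) (hρ : Real.arsinh (d + 1) ≤ ρ) :
    (∫ x in Set.Icc (Real.arsinh (d + 1)) ρ,
        Real.sinh x ^ 2 / Real.sqrt (Real.sinh x ^ 2 - d ^ 2))
      ≤ (1 / 2) *
        (Real.sqrt (Real.exp (2 * ρ) - (2 + 4 * d ^ 2))
          - Real.sqrt (8 * d + 2)) := by
  have hstart : 8 * d + 2 ≤ exp (2 * arsinh (d + 1)) - (2 + 4 * d ^ 2) := by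
    linarith [four_mul_sq_add_one_le_exp_two_mul_arsinh (s := d + 1) (by linarith)]
  have hpos : ∀ x ∈ Set.Icc (arsinh (d + 1)) ρ, 0 < exp (2 * x) - (2 + 4 * d ^ 2) := by
    intro x hx
    have : exp (2 * arsinh (d + 1)) ≤ exp (2 * x) := exp_le_exp.2 (by linarith [hx.1])
    linarith
  have hnonneg : ∀ x ∈ Set.Icc (arsinh (d + 1)) ρ, 0 ≤ x := fun x hx =>
    (arsinh_nonneg_iff.2 (by linarith)).trans hx.1
  have hsinh : ∀ x ∈ Set.Icc (arsinh (d + 1)) ρ, 0 < sinh x ^ 2 - d ^ 2 := fun x hx => by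
    linarith [hpos x hx, exp_two_mul_sub_two_le_four_mul_sinh_sq x]
  have hf : IntervalIntegrable (fun x => sinh x ^ 2 / √(sinh x ^ 2 - d ^ 2)) volume
      (arsinh (d + 1)) ρ := by
    apply ContinuousOn.intervalIntegrable_of_Icc hρ
    exact ContinuousOn.div (by fun_prop) (by fun_prop) fun x hx => (sqrt_pos.2 (hsinh x hx)).ne'
  have hg : IntervalIntegrable
      (fun x => exp (2 * x) / (2 * √(exp (2 * x) - (2 + 4 * d ^ 2)))) volume
      (arsinh (d + 1)) ρ := by
    apply ContinuousOn.intervalIntegrable_of_Icc hρ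
    exact ContinuousOn.div (by fun_prop) (by fun_prop) fun x hx =>
      (mul_pos two_pos (sqrt_pos.2 (hpos x hx))).ne'
  rw [integral_Icc_eq_integral_Ioc, ← intervalIntegral.integral_of_le hρ]
  have hmono := intervalIntegral.integral_mono_on hρ hf hg fun x hx =>
    sinh_sq_div_sqrt_le (hnonneg x hx) (hpos x hx)
  rw [intervalIntegral.integral_eq_sub_of_hasDerivAt (fun x hx =>
    hasDerivAt_sqrt_exp_two_mul_sub_div_two (hpos x (Set.uIcc_of_le hρ ▸ hx))) hg] at hmono
  linarith [sqrt_le_sqrt hstart]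
end

section
/- There exists d₀ > 0 such that for all real d ≥ d₀: (d+1) · log( ( √(1 + (d+1)²) + √(2d+1) ) / √(1 + d²) ) + (1/2)·( √( d³ − (2 + 4d²) ) − √(8d + 2) ) < cosh( (3/2)·log d ) − 1. -/
open Real

/-- The logarithmic term is at most a constant multiple of `√d`, here written with `d = s ^ 2`. -/
lemma add_one_mul_log_le {s : ℝ} (hs : 10 ≤ s) :
    (s ^ 2 + 1) * log ((√(1 + (s ^ 2 + 1) ^ 2) + √(2 * s ^ 2 + 1)) / √(1 + (s ^ 2) ^ 2))
      ≤ 1.01 * (1 + 1.5 * s) := by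
  have hs2 : 100 ≤ s ^ 2 := by nlinarith
  set a := √(1 + (s ^ 2) ^ 2)
  have ha : s ^ 2 ≤ a := le_sqrt_of_sq_le (by linarith)
  have ha_sq : a ^ 2 = 1 + (s ^ 2) ^ 2 := sq_sqrt (by positivity)
  have ha_pos : 0 < a := by linarith
  have h₁ : √(1 + (s ^ 2 + 1) ^ 2) ≤ a + 1 :=
    sqrt_le_iff.2 ⟨by linarith, by nlinarith⟩
  have h₂ : √(2 * s ^ 2 + 1) ≤ 1.5 * s :=
    sqrt_le_iff.2 ⟨by linarith, by nlinarith⟩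
  have hlog : log ((√(1 + (s ^ 2 + 1) ^ 2) + √(2 * s ^ 2 + 1)) / a) ≤ (1 + 1.5 * s) / s ^ 2 :=
    calc _ ≤ (√(1 + (s ^ 2 + 1) ^ 2) + √(2 * s ^ 2 + 1)) / a - 1 :=
          log_le_sub_one_of_pos (by positivity)
      _ ≤ (a + 1 + 1.5 * s) / a - 1 := by gcongr
      _ = (1 + 1.5 * s) / a := by field_simp; ring
      _ ≤ (1 + 1.5 * s) / s ^ 2 := by gcongr
  calc _ ≤ (s ^ 2 + 1) * ((1 + 1.5 * s) / s ^ 2) := by gcongr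
    _ = (s ^ 2 + 1) / s ^ 2 * (1 + 1.5 * s) := by ring
    _ ≤ 1.01 * (1 + 1.5 * s) := by
      gcongr
      rw [div_le_iff₀ (by positivity)]
      linarith

lemma half_pow_three_le_cosh {s : ℝ} (hs : 0 < s) :
    s ^ 3 / 2 ≤ cosh (3 / 2 * log (s ^ 2)) := by
  have h : 3 / 2 * log (s ^ 2) = log (s ^ 3) := by
    rw [log_pow, log_pow]; push_cast; ring
  rw [h, cosh_log (by positivity)]
  have : 0 < (s ^ 3)⁻¹ := by positivity
  linarith

theorem area_bound_lt_disks_for_large_d :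
    ∃ d₀ : ℝ, 0 < d₀ ∧ ∀ d : ℝ, d₀ ≤ d →
      (d + 1) *
        Real.log ((Real.sqrt (1 + (d + 1) ^ 2) + Real.sqrt (2 * d + 1))
          / Real.sqrt (1 + d ^ 2))
      + (1 / 2) *
        (Real.sqrt (d ^ 3 - (2 + 4 * d ^ 2)) - Real.sqrt (8 * d + 2))
      < Real.cosh ((3 / 2) * Real.log d) - 1 := by
  refine ⟨100, by norm_num, fun d hd => ?_⟩
  obtain ⟨s, hs, rfl⟩ : ∃ s : ℝ, 10 ≤ s ∧ d = s ^ 2 :=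
    ⟨√d, le_sqrt_of_sq_le (by linarith), (sq_sqrt (by linarith)).symm⟩
  have hlog := add_one_mul_log_le hs
  have hcosh := half_pow_three_le_cosh (show 0 < s by linarith)
  have h₁ : √((s ^ 2) ^ 3 - (2 + 4 * (s ^ 2) ^ 2)) ≤ s ^ 3 - 2 * s :=
    sqrt_le_iff.2 ⟨by nlinarith, by nlinarith⟩
  have h₂ : 2.8 * s ≤ √(8 * s ^ 2 + 2) := le_sqrt_of_sq_le (by nlinarith)
  linarith
end

section
/- There exists d₀ > 0 such that for every real d ≥ d₀, one has ∫_{(arsinh d, (3/2)·log d]} sinh² x / √(sinh² x − d²) dx < cosh( (3/2)·log d ) − 1. -/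
open MeasureTheory Real

/-- The comparison integrand `sinh x * cosh x / √(sinh² x - d²)` is the derivative of
`√(sinh² x - d²)`. -/
lemma hasDerivAt_sqrt_sinh_sq_sub {d x : ℝ} (h : 0 < sinh x ^ 2 - d ^ 2) :
    HasDerivAt (fun y => √(sinh y ^ 2 - d ^ 2)) (sinh x * cosh x / √(sinh x ^ 2 - d ^ 2)) x := by
  have h1 := ((((hasDerivAt_sinh x).pow 2).sub_const (d ^ 2)).sqrt h.ne')
  refine h1.congr_deriv ?_
  have := (sqrt_pos.2 h).ne'
  simp only [Pi.pow_apply]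
  field_simp
  norm_num

lemma setIntegral_sinh_sq_div_sqrt_le {d R : ℝ} (hd : 0 ≤ d) (hR : arsinh d ≤ R) :
    ∫ x in Set.Ioc (arsinh d) R, sinh x ^ 2 / √(sinh x ^ 2 - d ^ 2) ≤ √(sinh R ^ 2 - d ^ 2) := by
  have hlt : ∀ x, arsinh d < x → d < sinh x := fun x hx => by
    simpa using sinh_lt_sinh.2 hx
  have hpos : ∀ x, arsinh d < x → 0 < sinh x ^ 2 - d ^ 2 := fun x hx => by
    nlinarith [hlt x hx]
  have hcont : ContinuousOn (fun y => √(sinh y ^ 2 - d ^ 2)) (Set.Icc (arsinh d) R) := by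
    fun_prop
  have hderiv : ∀ x ∈ Set.Ioo (arsinh d) R, HasDerivAt (fun y => √(sinh y ^ 2 - d ^ 2))
      (sinh x * cosh x / √(sinh x ^ 2 - d ^ 2)) x :=
    fun x hx => hasDerivAt_sqrt_sinh_sq_sub (hpos x hx.1)
  have hint : IntegrableOn (fun x => sinh x * cosh x / √(sinh x ^ 2 - d ^ 2))
      (Set.Ioc (arsinh d) R) := by
    refine intervalIntegral.integrableOn_deriv_of_nonneg hcont hderiv fun x hx => ?_
    have := hd.trans_lt (hlt x hx.1)
    have := cosh_pos x
    positivity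
  calc ∫ x in Set.Ioc (arsinh d) R, sinh x ^ 2 / √(sinh x ^ 2 - d ^ 2)
      ≤ ∫ x in Set.Ioc (arsinh d) R, sinh x * cosh x / √(sinh x ^ 2 - d ^ 2) := by
        refine integral_mono_of_nonneg (.of_forall fun x => by positivity) hint ?_
        refine (ae_restrict_iff' measurableSet_Ioc).2 (.of_forall fun x hx => ?_)
        have := hd.trans_lt (hlt x hx.1)
        have := (sinh_lt_cosh x).le
        dsimp only
        gcongr
        nlinarith
    _ = √(sinh R ^ 2 - d ^ 2) := by
        rw [← intervalIntegral.integral_of_le hR,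
          intervalIntegral.integral_eq_sub_of_hasDerivAt_of_le hR hcont hderiv
            ((intervalIntegrable_iff_integrableOn_Ioc_of_le hR).2 hint)]
        simp

lemma two_mul_cosh_three_halves_log_le {d : ℝ} (hd : 1 ≤ d) :
    2 * cosh (3 / 2 * log d) ≤ d ^ 2 + 1 := by
  have hlog := log_nonneg hd
  have h1 : exp (3 / 2 * log d) ≤ d ^ 2 := by
    rw [← exp_log (show 0 < d ^ 2 by positivity), log_pow]
    gcongr
    norm_num
  have h2 : exp (-(3 / 2 * log d)) ≤ 1 := exp_le_one_iff.2 (by linarith)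
  rw [cosh_eq]
  linarith

theorem catenoid_area_lt_disks_for_large_d :
    ∃ d₀ : ℝ, 0 < d₀ ∧ ∀ d : ℝ, d₀ ≤ d →
      (∫ x in Set.Ioc (Real.arsinh d) ((3 / 2) * Real.log d),
          Real.sinh x ^ 2 / Real.sqrt (Real.sinh x ^ 2 - d ^ 2))
        < Real.cosh ((3 / 2) * Real.log d) - 1 := by
  refine ⟨2, two_pos, fun d hd => ?_⟩
  have hcosh : 1 < cosh (3 / 2 * log d) := by
    have := log_pos (show 1 < d by linarith)
    exact one_lt_cosh.2 (by positivity)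
  rcases le_total (3 / 2 * log d) (arsinh d) with hR | hR
  · simpa [Set.Ioc_eq_empty_of_le hR] using hcosh
  · refine (setIntegral_sinh_sq_div_sqrt_le (by linarith) hR).trans_lt ?_
    rw [sqrt_lt' (by linarith), sinh_sq]
    nlinarith [two_mul_cosh_three_halves_log_le (show 1 ≤ d by linarith)]
end

section
/- The function h(d) = ∫_{(arsinh d, ∞)} d / √(sinh² x − d²) dx tends to π/2 as d → ∞. -/
open MeasureTheory Filter Real

section Catenoid

variable {d x : ℝ}

theorem lt_sinh_of_mem_Ioi_arsinh (hx : x ∈ Set.Ioi (arsinh d)) : d < sinh x := by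
  simpa using sinh_lt_sinh.2 hx

/-- The primitive of `d cosh x / (sinh x √(sinh² x - d²))`. -/
theorem hasDerivAt_arctan_sqrt_sinh_sq_sub (hd : 0 < d) (hx : d < sinh x) :
    HasDerivAt (fun x => arctan (√(sinh x ^ 2 - d ^ 2) / d))
      (d / √(sinh x ^ 2 - d ^ 2) * (cosh x / sinh x)) x := by
  have hs : 0 < sinh x ^ 2 - d ^ 2 := by nlinarith
  have hsinh : sinh x ≠ 0 := (hd.trans hx).ne'
  have hr : √(sinh x ^ 2 - d ^ 2) ≠ 0 := (sqrt_pos.2 hs).ne'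
  have key := (((((hasDerivAt_sinh x).pow 2).sub_const (d ^ 2)).sqrt hs.ne').div_const d).arctan
  refine key.congr_deriv ?_
  have h : 1 + (√(sinh x ^ 2 - d ^ 2) / d) ^ 2 = sinh x ^ 2 / d ^ 2 := by
    rw [div_pow, sq_sqrt hs.le]
    field_simp
    ring
  simp only [Pi.pow_apply]
  rw [h]
  field_simp
  simp [mul_comm]

theorem tendsto_sinh_atTop : Tendsto sinh atTop atTop :=
  tendsto_atTop_mono' atTop
    ((eventually_ge_atTop 0).mono fun _ hx => self_le_sinh_iff.2 hx) tendsto_id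

theorem tendsto_arctan_sqrt_sinh_sq_sub (hd : 0 < d) :
    Tendsto (fun x => arctan (√(sinh x ^ 2 - d ^ 2) / d)) atTop (nhds (π / 2)) := by
  refine (tendsto_nhds_of_tendsto_nhdsWithin tendsto_arctan_atTop).comp
    ((tendsto_sqrt_atTop.comp ?_).atTop_div_const hd)
  exact tendsto_atTop_add_const_right _ _
    ((tendsto_pow_atTop two_ne_zero).comp tendsto_sinh_atTop)

theorem integrand_mul_coth_nonneg (hd : 0 < d) :
    ∀ x ∈ Set.Ioi (arsinh d), 0 ≤ d / √(sinh x ^ 2 - d ^ 2) * (cosh x / sinh x) := by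
  intro x hx
  have := hd.trans (lt_sinh_of_mem_Ioi_arsinh hx)
  have := cosh_pos x
  positivity

theorem continuous_arctan_sqrt_sinh_sq_sub (d : ℝ) :
    Continuous fun x => arctan (√(sinh x ^ 2 - d ^ 2) / d) := by
  have := continuous_sinh
  fun_prop

theorem integrableOn_integrand_mul_coth (hd : 0 < d) :
    IntegrableOn (fun x => d / √(sinh x ^ 2 - d ^ 2) * (cosh x / sinh x))
      (Set.Ioi (arsinh d)) :=
  integrableOn_Ioi_deriv_of_nonneg (continuous_arctan_sqrt_sinh_sq_sub d).continuousWithinAt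
    (fun _ hx => hasDerivAt_arctan_sqrt_sinh_sq_sub hd (lt_sinh_of_mem_Ioi_arsinh hx))
    (integrand_mul_coth_nonneg hd) (tendsto_arctan_sqrt_sinh_sq_sub hd)

theorem integral_integrand_mul_coth (hd : 0 < d) :
    ∫ x in Set.Ioi (arsinh d), d / √(sinh x ^ 2 - d ^ 2) * (cosh x / sinh x) = π / 2 := by
  rw [integral_Ioi_of_hasDerivAt_of_nonneg
    (continuous_arctan_sqrt_sinh_sq_sub d).continuousWithinAt
    (fun _ hx => hasDerivAt_arctan_sqrt_sinh_sq_sub hd (lt_sinh_of_mem_Ioi_arsinh hx))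
    (integrand_mul_coth_nonneg hd) (tendsto_arctan_sqrt_sinh_sq_sub hd)]
  simp

theorem integrand_le_mul_coth (hd : 0 < d) (hx : d < sinh x) :
    d / √(sinh x ^ 2 - d ^ 2) ≤ d / √(sinh x ^ 2 - d ^ 2) * (cosh x / sinh x) :=
  le_mul_of_one_le_right (by positivity) ((one_le_div (hd.trans hx)).2 (sinh_lt_cosh x).le)

theorem mul_coth_le_integrand (hd : 0 < d) (hx : d < sinh x) :
    d / (d + 1) * (d / √(sinh x ^ 2 - d ^ 2) * (cosh x / sinh x)) ≤
      d / √(sinh x ^ 2 - d ^ 2) := by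
  have hs : 0 < sinh x := hd.trans hx
  have hc : cosh x ≤ sinh x + 1 := by
    have h := cosh_sub_sinh x
    have h' : exp (-x) ≤ 1 := exp_le_one_iff.2 (by linarith [sinh_pos_iff.1 hs])
    linarith
  rw [mul_left_comm]
  refine mul_le_of_le_one_right (by positivity) ?_
  rw [div_mul_div_comm, div_le_one (by positivity)]
  nlinarith

theorem integrableOn_integrand (hd : 0 < d) :
    IntegrableOn (fun x => d / √(sinh x ^ 2 - d ^ 2)) (Set.Ioi (arsinh d)) := by
  refine (integrableOn_integrand_mul_coth hd).mono' ?_ ?_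
  · have := measurable_sinh
    exact Measurable.aestronglyMeasurable (by fun_prop)
  · refine (ae_restrict_iff' measurableSet_Ioi).2 (Eventually.of_forall fun x hx => ?_)
    rw [norm_of_nonneg (by positivity)]
    exact integrand_le_mul_coth hd (lt_sinh_of_mem_Ioi_arsinh hx)

end Catenoid

theorem catenoid_half_height_tendsto_pi_div_two :
    Filter.Tendsto
      (fun d : ℝ =>
        ∫ x in Set.Ioi (Real.arsinh d),
          d / Real.sqrt (Real.sinh x ^ 2 - d ^ 2))
      Filter.atTop (nhds (Real.pi / 2)) := by
  have hlim : Tendsto (fun d : ℝ => d / (d + 1) * (π / 2)) atTop (nhds (π / 2)) := by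
    have h : Tendsto (fun d : ℝ => 1 - (d + 1)⁻¹) atTop (nhds (1 - 0)) :=
      tendsto_const_nhds.sub
        (tendsto_inv_atTop_zero.comp (tendsto_atTop_add_const_right _ _ tendsto_id))
    rw [sub_zero] at h
    have h' : Tendsto (fun d : ℝ => d / (d + 1)) atTop (nhds 1) := by
      refine h.congr' ((eventually_gt_atTop 0).mono fun d hd => ?_)
      have : d + 1 ≠ 0 := by positivity
      field_simp
      ring
    simpa using h'.mul_const (π / 2)
  refine tendsto_of_tendsto_of_tendsto_of_le_of_le' hlim tendsto_const_nhds ?_ ?_ <;>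
    refine (eventually_gt_atTop 0).mono fun d hd => ?_
  · rw [← integral_integrand_mul_coth hd, ← integral_const_mul]
    exact setIntegral_mono_on ((integrableOn_integrand_mul_coth hd).const_mul _)
      (integrableOn_integrand hd) measurableSet_Ioi
      fun x hx => mul_coth_le_integrand hd (lt_sinh_of_mem_Ioi_arsinh hx)
  · rw [← integral_integrand_mul_coth hd]
    exact setIntegral_mono_on (integrableOn_integrand hd)
      (integrableOn_integrand_mul_coth hd) measurableSet_Ioi
      fun x hx => integrand_le_mul_coth hd (lt_sinh_of_mem_Ioi_arsinh hx)
end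

section
/- The function h(d) = ∫_{(arsinh d, ∞)} d / √(sinh² x − d²) dx tends to 0 as d → 0 from the right (limit along positive d tending to 0). -/
open MeasureTheory Filter Real

theorem mul_exp_half_le_two_mul_sinh {t : ℝ} (ht : 0 ≤ t) : t * exp (t / 2) ≤ 2 * sinh t := by
  have hdouble : sinh t = 2 * sinh (t / 2) * cosh (t / 2) := by
    rw [← sinh_two_mul]; ring_nf
  have hsinh : t / 2 ≤ sinh (t / 2) := self_le_sinh_iff.2 (by positivity)
  have hcosh : exp (t / 2) / 2 ≤ cosh (t / 2) := by
    rw [cosh_eq]; linarith [exp_pos (-(t / 2))]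
  have := mul_le_mul hsinh hcosh (by positivity) (by linarith)
  linarith

theorem mul_mul_exp_half_le_sinh_sq_sub_sq {d t : ℝ} (hd : 0 ≤ d) (ht : 0 ≤ t) :
    d * (t * exp (t / 2)) ≤ sinh (t + arsinh d) ^ 2 - d ^ 2 := by
  have hsq : √(1 + d ^ 2) ^ 2 = 1 + d ^ 2 := sq_sqrt (by positivity)
  have hone : 1 ≤ √(1 + d ^ 2) := one_le_sqrt.2 (by nlinarith)
  have hsinh : 0 ≤ sinh t := sinh_nonneg_iff.2 ht
  have hexpand : sinh (t + arsinh d) ^ 2 - d ^ 2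
      = (1 + 2 * d ^ 2) * sinh t ^ 2 + 2 * d * (sinh t * (cosh t * √(1 + d ^ 2))) := by
    rw [sinh_add, sinh_arsinh, cosh_arsinh]
    linear_combination sinh t ^ 2 * hsq + d ^ 2 * cosh_sq t
  have hprod : 1 ≤ cosh t * √(1 + d ^ 2) := one_le_mul_of_one_le_of_one_le (one_le_cosh t) hone
  have hlower : d * (2 * sinh t) ≤ 2 * d * (sinh t * (cosh t * √(1 + d ^ 2))) := by
    nlinarith [mul_le_mul_of_nonneg_left hprod (mul_nonneg hd hsinh)]
  have := mul_le_mul_of_nonneg_left (mul_exp_half_le_two_mul_sinh ht) hd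
  have : 0 ≤ (1 + 2 * d ^ 2) * sinh t ^ 2 := by positivity
  linarith

theorem div_sqrt_sinh_sq_sub_sq_le {d t : ℝ} (hd : 0 < d) (ht : 0 < t) :
    d / √(sinh (t + arsinh d) ^ 2 - d ^ 2)
      ≤ √d * (t ^ (-1 / 2 : ℝ) * exp (-(1 / 4) * t)) := by
  have hroot : √(d * (t * exp (t / 2))) = √d * (√t * exp (t / 4)) := by
    rw [sqrt_mul hd.le, sqrt_mul ht.le, ← exp_half]; ring_nf
  have hpow : t ^ (-1 / 2 : ℝ) = (√t)⁻¹ := by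
    rw [sqrt_eq_rpow, ← rpow_neg ht.le]; norm_num
  have hexp : exp (-(1 / 4) * t) = (exp (t / 4))⁻¹ := by
    rw [← exp_neg]; ring_nf
  have hle := sqrt_le_sqrt (mul_mul_exp_half_le_sinh_sq_sub_sq hd.le ht.le)
  rw [hroot] at hle
  have hd' : 0 < √d := sqrt_pos.2 hd
  have ht' : 0 < √t := sqrt_pos.2 ht
  calc d / √(sinh (t + arsinh d) ^ 2 - d ^ 2)
      ≤ d / (√d * (√t * exp (t / 4))) := by gcongr
    _ = √d * (t ^ (-1 / 2 : ℝ) * exp (-(1 / 4) * t)) := by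
      rw [hpow, hexp]
      field_simp
      exact (sq_sqrt hd.le).symm

theorem catenoid_half_height_le {d : ℝ} (hd : 0 < d) :
    ∫ x in Set.Ioi (arsinh d), d / √(sinh x ^ 2 - d ^ 2)
      ≤ √d * ∫ t in Set.Ioi (0 : ℝ), t ^ (-1 / 2 : ℝ) * exp (-(1 / 4) * t) := by
  have hint : IntegrableOn (fun t : ℝ => t ^ (-1 / 2 : ℝ) * exp (-(1 / 4) * t)) (Set.Ioi 0) := by
    simpa using integrableOn_rpow_mul_exp_neg_mul_rpow (s := -1 / 2) (p := 1) (b := 1 / 4)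
      (by norm_num) one_pos (by norm_num)
  have hshift := (measurePreserving_add_right volume (arsinh d)).setIntegral_preimage_emb
    (measurableEmbedding_addRight (arsinh d)) (fun x => d / √(sinh x ^ 2 - d ^ 2))
    (Set.Ioi (arsinh d))
  rw [Set.preimage_add_const_Ioi, sub_self] at hshift
  rw [← hshift, ← integral_const_mul]
  refine integral_mono_of_nonneg (Eventually.of_forall fun t => by positivity)
    (hint.const_mul _) ?_
  filter_upwards [ae_restrict_mem measurableSet_Ioi] with t ht
  exact div_sqrt_sinh_sq_sub_sq_le hd ht

theorem catenoid_half_height_tendsto_zero :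
    Filter.Tendsto
      (fun d : ℝ =>
        ∫ x in Set.Ioi (Real.arsinh d),
          d / Real.sqrt (Real.sinh x ^ 2 - d ^ 2))
      (nhdsWithin 0 (Set.Ioi 0)) (nhds 0) := by
  have hbound : Tendsto
      (fun d : ℝ => √d * ∫ t in Set.Ioi (0 : ℝ), t ^ (-1 / 2 : ℝ) * exp (-(1 / 4) * t))
      (nhdsWithin 0 (Set.Ioi 0)) (nhds 0) := by
    have hcont := (continuous_sqrt.mul_const
      (∫ t in Set.Ioi (0 : ℝ), t ^ (-1 / 2 : ℝ) * exp (-(1 / 4) * t))).tendsto 0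
    rw [sqrt_zero, zero_mul] at hcont
    exact hcont.mono_left nhdsWithin_le_nhds
  refine tendsto_of_tendsto_of_tendsto_of_le_of_le' tendsto_const_nhds hbound ?_ ?_
  · filter_upwards [self_mem_nhdsWithin] with d hd
    have hd' : 0 < d := hd
    exact integral_nonneg fun x => by positivity
  · filter_upwards [self_mem_nhdsWithin] with d hd
    exact catenoid_half_height_le hd
end

section
/- The function h(d) = ∫_{(arsinh d, ∞)} d / √(sinh² x − d²) dx is strictly monotone increasing on (0, ∞): for all real numbers 0 < d₁ < d₂ one has h(d₁) < h(d₂). -/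
open MeasureTheory Real

lemma image_arsinh_mul_cosh_Ioi {d : ℝ} (hd : 0 < d) :
    (fun u => arsinh (d * cosh u)) '' Set.Ioi 0 = Set.Ioi (arsinh d) := by
  ext y
  constructor
  · rintro ⟨u, hu, rfl⟩
    exact arsinh_lt_arsinh.2 (lt_mul_of_one_lt_right hd (one_lt_cosh.2 (ne_of_gt hu)))
  · intro hy
    have hlt : 1 < sinh y / d := by
      rw [one_lt_div hd, ← sinh_arsinh d]
      exact sinh_lt_sinh.2 hy
    refine ⟨arcosh (sinh y / d), arcosh_pos hlt, ?_⟩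
    simp only
    rw [cosh_arcosh hlt.le, mul_div_cancel₀ _ hd.ne', arsinh_sinh]

/-- The substitution `sinh x = d * cosh u` moves the parameter out of the domain of integration. -/
lemma integral_div_sqrt_sinh_sq_sub {d : ℝ} (hd : 0 < d) :
    ∫ x in Set.Ioi (arsinh d), d / √(sinh x ^ 2 - d ^ 2) =
      ∫ u in Set.Ioi (0 : ℝ), d / √(1 + (d * cosh u) ^ 2) := by
  have hderiv (u : ℝ) (_ : u ∈ Set.Ioi (0 : ℝ)) : HasDerivWithinAt
      (fun u => arsinh (d * cosh u)) ((√(1 + (d * cosh u) ^ 2))⁻¹ • (d * sinh u))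
      (Set.Ioi 0) u :=
    ((hasDerivAt_cosh u).const_mul d).arsinh.hasDerivWithinAt
  have hinj : Set.InjOn (fun u => arsinh (d * cosh u)) (Set.Ioi 0) := fun u hu v hv huv =>
    cosh_strictMonoOn.injOn (Set.Ioi_subset_Ici_self hu) (Set.Ioi_subset_Ici_self hv)
      (mul_left_cancel₀ hd.ne' (arsinh_injective huv))
  rw [← image_arsinh_mul_cosh_Ioi hd,
    integral_image_eq_integral_abs_deriv_smul measurableSet_Ioi hderiv hinj]
  refine setIntegral_congr_fun measurableSet_Ioi fun u hu => ?_
  have hs : 0 < sinh u := sinh_pos_iff.2 hu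
  have hsqrt : √((d * cosh u) ^ 2 - d ^ 2) = d * sinh u := by
    rw [← sqrt_sq (mul_pos hd hs).le, mul_pow, mul_pow, cosh_sq]
    ring_nf
  simp only [sinh_arsinh, smul_eq_mul]
  rw [hsqrt, abs_of_nonneg (by positivity)]
  field_simp

lemma integrableOn_div_sqrt_one_add_mul_cosh_sq {d : ℝ} (hd : 0 < d) :
    IntegrableOn (fun u => d / √(1 + (d * cosh u) ^ 2)) (Set.Ioi 0) := by
  refine ((integrableOn_exp_neg_Ioi 0).const_mul 2).mono'
    (Measurable.aestronglyMeasurable (by fun_prop)) (ae_of_all _ fun u => ?_)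
  have hc : 0 < cosh u := cosh_pos u
  have hle : d * cosh u ≤ √(1 + (d * cosh u) ^ 2) := le_sqrt_of_sq_le (by linarith)
  rw [norm_of_nonneg (by positivity)]
  calc d / √(1 + (d * cosh u) ^ 2) ≤ d / (d * cosh u) := by gcongr
    _ = 1 / cosh u := by field_simp
    _ ≤ 2 * exp (-u) := by
      rw [div_le_iff₀ hc, cosh_eq]
      have h : exp (-u) * exp u = 1 := by rw [← exp_add]; simp
      nlinarith [sq_nonneg (exp (-u))]

lemma div_sqrt_one_add_mul_sq_lt {a b c : ℝ} (ha : 0 < a) (hab : a < b) :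
    a / √(1 + (a * c) ^ 2) < b / √(1 + (b * c) ^ 2) := by
  have hb : 0 < b := ha.trans hab
  rw [div_lt_div_iff₀ (by positivity) (by positivity)]
  refine lt_of_pow_lt_pow_left₀ 2 (by positivity) ?_
  rw [mul_pow a √_, mul_pow b √_, sq_sqrt (by positivity), sq_sqrt (by positivity)]
  nlinarith

theorem catenoid_half_height_strictMono
    (d₁ d₂ : ℝ) (h₁ : 0 < d₁) (h₁₂ : d₁ < d₂) :
    (∫ x in Set.Ioi (Real.arsinh d₁),
        d₁ / Real.sqrt (Real.sinh x ^ 2 - d₁ ^ 2))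
      < ∫ x in Set.Ioi (Real.arsinh d₂),
          d₂ / Real.sqrt (Real.sinh x ^ 2 - d₂ ^ 2) := by
  have h₂ : 0 < d₂ := h₁.trans h₁₂
  have hi₁ := integrableOn_div_sqrt_one_add_mul_cosh_sq h₁
  have hi₂ := integrableOn_div_sqrt_one_add_mul_cosh_sq h₂
  have hpos (u : ℝ) := sub_pos.2 (div_sqrt_one_add_mul_sq_lt (c := cosh u) h₁ h₁₂)
  rw [integral_div_sqrt_sinh_sq_sub h₁, integral_div_sqrt_sinh_sq_sub h₂, ← sub_pos,
    ← integral_sub hi₂ hi₁,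
    setIntegral_pos_iff_support_of_nonneg_ae (ae_of_all _ fun u => (hpos u).le) (hi₂.sub hi₁),
    Function.support_eq_univ fun u => (hpos u).ne']
  simp
end
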